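/- arXiv:1507.02736 — 2 statements merged into one kernel-verified Lean document; each statement's English description precedes it below -/
import Mathlib

section
/- There exists a constant C₁ > 0 with the following property. For every integer D ≥ 2, every orthonormal basis φ_1,…,φ_D of ℂ^D, and every rank-d orthogonal projection P⁰ onto a coordinate subspace with C₁·log D < d < D/C₁, one has ∫_{U(D)} [ max_{1 ≤ α ≠ β ≤ D} |⟨φ_α, U P⁰ U⁻¹ φ_β⟩|² + max_{1 ≤ α ≤ D} |⟨φ_α, U P⁰ U⁻¹ φ_α⟩ − d/D|² ] dμ(U) < 10·(log D)/D, where μ is the Haar probability measure on the unitary group U(D). -/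
open MeasureTheory Filter

noncomputable section

/-- The unitary group U(D) of ℂ^D. -/
abbrev UG (D : ℕ) := Matrix.unitaryGroup (Fin D) ℂ

instance (D : ℕ) : MeasurableSpace (UG D) := borel _
instance (D : ℕ) : BorelSpace (UG D) := ⟨rfl⟩

/-- The squared euclidean norm ‖v‖² on ℂ^D. -/
def nsq {D : ℕ} (v : Fin D → ℂ) : ℝ := ∑ i, ‖v i‖ ^ 2

/-- The hermitian inner product ⟨v,w⟩ on ℂ^D (conjugate-linear in the first variable). -/
def dotc {D : ℕ} (v w : Fin D → ℂ) : ℂ := ∑ i, (starRingEnd ℂ) (v i) * w i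

/-- The orthogonal projection U P U⁻¹ onto the image under U of the range of P. -/
def rotProj {D : ℕ} (U : UG D) (P : Matrix (Fin D) (Fin D) ℂ) : Matrix (Fin D) (Fin D) ℂ :=
  (U : Matrix (Fin D) (Fin D) ℂ) * P * ((U⁻¹ : UG D) : Matrix (Fin D) (Fin D) ℂ)

/-- The orthogonal projection onto the coordinate subspace spanned by the standard
basis vectors with indices in s. -/
def coordProj (D : ℕ) (s : Finset (Fin D)) : Matrix (Fin D) (Fin D) ℂ :=
  Matrix.diagonal (fun i => if i ∈ s then 1 else 0)

/-!
For a unit vector `v` and positive weights `b`, integrating the Gaussian `exp (-∑ i, b i * |g i|²)`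
over `ℂ^D` directly and in polar form gives the exact identity
`∫ (∑ i, b i * |(U⁻¹ v) i|²)⁻ᴰ dU = ∏ i, (b i)⁻¹`. Take `b i = 1 - c i / D` with `∑ i, c i = 0` and
`|c i| ≤ D / 2`: since `(1 - x / D) ^ D ≤ exp (-x)` and `(1 - t)⁻¹ ≤ exp (t + 2 * t²)`, this yields
the sub-Gaussian bound `∫ exp (∑ i, c i * |(U⁻¹ v) i|²) dU ≤ exp (2 * ∑ i, (c i)² / D²)`. A union
bound then controls the largest of polynomially many such quadratic forms, and by polarization every
coefficient of the traceless part of the rotated projection is a combination of four of them.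
-/

open scoped Matrix

section GaussianIntegral

variable {ι : Type*} [Fintype ι]

/-- The quadratic form `∑ i, c i * |v i|²` of the real diagonal matrix with entries `c`. -/
def diagForm (c : ι → ℝ) (v : ι → ℂ) : ℝ := ∑ i, c i * ‖v i‖ ^ 2

lemma continuous_diagForm (c : ι → ℝ) : Continuous (diagForm c) := by
  unfold diagForm; fun_prop

lemma diagForm_smul_right (c : ι → ℝ) (z : ℂ) (v : ι → ℂ) :
    diagForm c (z • v) = ‖z‖ ^ 2 * diagForm c v := by
  simp only [diagForm, Pi.smul_apply, smul_eq_mul, norm_mul, mul_pow, Finset.mul_sum]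
  exact Finset.sum_congr rfl fun i _ => by ring

lemma diagForm_smul_left (r : ℝ) (c : ι → ℝ) (v : ι → ℂ) :
    diagForm (r • c) v = r * diagForm c v := by
  simp only [diagForm, Pi.smul_apply, smul_eq_mul, Finset.mul_sum, mul_assoc]

lemma diagForm_pos {b : ι → ℝ} (hb : ∀ i, 0 < b i) {v : ι → ℂ} (hv : v ≠ 0) :
    0 < diagForm b v := by
  obtain ⟨i, hi⟩ := Function.ne_iff.1 hv
  have pos_i : 0 < ‖v i‖ := norm_pos_iff.2 hi
  exact Finset.sum_pos' (fun j _ => mul_nonneg (hb j).le (sq_nonneg _))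
    ⟨i, Finset.mem_univ i, mul_pos (hb i) (pow_pos pos_i 2)⟩

lemma integrable_exp_neg_mul_sq_norm {b : ℝ} (hb : 0 < b) :
    Integrable fun z : ℂ => Real.exp (-b * ‖z‖ ^ 2) :=
  .of_integral_ne_zero <| by
    rw [GaussianFourier.integral_rexp_neg_mul_sq_norm hb]
    positivity

lemma lintegral_exp_neg_diagForm {b : ι → ℝ} (hb : ∀ i, 0 < b i) :
    ∫⁻ g : ι → ℂ, ENNReal.ofReal (Real.exp (-diagForm b g)) =
      ENNReal.ofReal (∏ i, Real.pi / b i) := by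
  have exp_eq_prod (g : ι → ℂ) :
      Real.exp (-diagForm b g) = ∏ i, Real.exp (-b i * ‖g i‖ ^ 2) := by
    simp only [diagForm, ← Real.exp_sum, neg_mul, Finset.sum_neg_distrib]
  have integrable_prod : Integrable fun g : ι → ℂ => ∏ i, Real.exp (-b i * ‖g i‖ ^ 2) :=
    Integrable.fintype_prod (f := fun i (z : ℂ) => Real.exp (-b i * ‖z‖ ^ 2))
      fun i => integrable_exp_neg_mul_sq_norm (hb i)
  simp_rw [exp_eq_prod]
  rw [← ofReal_integral_eq_lintegral_ofReal integrable_prod (.of_forall fun g => by positivity),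
    integral_fintype_prod_volume_eq_prod fun i (z : ℂ) => Real.exp (-b i * ‖z‖ ^ 2)]
  congr 1
  refine Finset.prod_congr rfl fun i _ => ?_
  rw [GaussianFourier.integral_rexp_neg_mul_sq_norm (hb i)]
  simp

end GaussianIntegral

section UnitaryAction

variable {D : ℕ}

lemma dotc_self (v : Fin D → ℂ) : dotc v v = nsq v := by
  simp [nsq, dotc, Complex.conj_mul']

lemma dotc_mulVec_mulVec (U : UG D) (v w : Fin D → ℂ) :
    dotc (U.1 *ᵥ v) (U.1 *ᵥ w) = dotc v w := by
  change star (U.1 *ᵥ v) ⬝ᵥ U.1 *ᵥ w = star v ⬝ᵥ w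
  rw [Matrix.star_mulVec, ← Matrix.dotProduct_mulVec, Matrix.mulVec_mulVec,
    ← Matrix.star_eq_conjTranspose, Matrix.UnitaryGroup.star_mul_self, Matrix.one_mulVec]

lemma nsq_mulVec (U : UG D) (v : Fin D → ℂ) : nsq (U.1 *ᵥ v) = nsq v := by
  have h := dotc_mulVec_mulVec U v v
  rw [dotc_self, dotc_self] at h
  exact_mod_cast h

lemma dotc_rotProj_mulVec (U : UG D) (P : Matrix (Fin D) (Fin D) ℂ) (v w : Fin D → ℂ) :
    dotc v (rotProj U P *ᵥ w) = dotc ((U⁻¹).1 *ᵥ v) (P *ᵥ (U⁻¹).1 *ᵥ w) := by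
  rw [← dotc_mulVec_mulVec U ((U⁻¹).1 *ᵥ v)]
  simp [rotProj, Matrix.mulVec_mulVec, Matrix.mul_assoc]

lemma measurePreserving_mulVec (U : UG D) :
    MeasurePreserving (fun v : Fin D → ℂ => U.1 *ᵥ v) := by
  have det_eq_one : LinearMap.det ((Matrix.toLin' U.1).restrictScalars ℝ) = 1 := by
    have h : ‖U.1.det‖ = 1 := CStarRing.norm_of_mem_unitary (Matrix.det_of_mem_unitary U.2)
    rw [LinearMap.det_restrictScalars, LinearMap.det_toLin', Algebra.norm_complex_apply,
      Complex.normSq_eq_norm_sq, h, one_pow]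
  refine ⟨by fun_prop, ?_⟩
  have h := Measure.map_linearMap_addHaar_eq_smul_addHaar
    (volume : Measure (Fin D → ℂ)) (f := (Matrix.toLin' U.1).restrictScalars ℝ)
    (by simp [det_eq_one])
  rwa [det_eq_one, inv_one, abs_one, ENNReal.ofReal_one, one_smul] at h

lemma nsq_nonneg (v : Fin D → ℂ) : 0 ≤ nsq v := by
  unfold nsq; positivity

lemma continuous_nsq : Continuous (nsq (D := D)) := by
  unfold nsq; fun_prop

lemma dim_pos_of_nsq_eq_one {v : Fin D → ℂ} (hv : nsq v = 1) : 0 < D := by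
  rcases D.eq_zero_or_pos with rfl | h
  · simp [nsq] at hv
  · exact h

lemma exists_mulVec_single_eq {v : Fin D → ℂ} (hv : nsq v = 1) (i : Fin D) :
    ∃ U : UG D, U.1 *ᵥ Pi.single i 1 = v := by
  let w : EuclideanSpace ℂ (Fin D) := WithLp.toLp 2 v
  have norm_w : ‖w‖ = 1 := by
    simpa [EuclideanSpace.norm_eq, nsq, w] using hv
  have orthonormal_w : Orthonormal ℂ (Set.domRestrict {i} fun _ : Fin D => w) :=
    ⟨fun _ => norm_w, fun j k hjk => (hjk (Subsingleton.elim j k)).elim⟩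
  obtain ⟨b, hb⟩ := orthonormal_w.exists_orthonormalBasis_extension_of_card_eq (by simp)
  refine ⟨⟨_, (EuclideanSpace.basisFun (Fin D) ℂ).toMatrix_orthonormalBasis_mem_unitary b⟩, ?_⟩
  ext k
  simp [Module.Basis.toMatrix_apply, hb i rfl, w]

lemma exists_mulVec_eq {v w : Fin D → ℂ} (hv : nsq v = 1) (hw : nsq w = 1) :
    ∃ U : UG D, U.1 *ᵥ v = w := by
  obtain ⟨i⟩ : Nonempty (Fin D) := ⟨⟨0, dim_pos_of_nsq_eq_one hv⟩⟩
  obtain ⟨V, rfl⟩ := exists_mulVec_single_eq hv i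
  obtain ⟨W, rfl⟩ := exists_mulVec_single_eq hw i
  refine ⟨W * V⁻¹, ?_⟩
  rw [Matrix.mulVec_mulVec, ← Matrix.UnitaryGroup.mul_val, inv_mul_cancel_right]

lemma nsq_smul (z : ℂ) (v : Fin D → ℂ) : nsq (z • v) = ‖z‖ ^ 2 * nsq v := by
  simp [nsq, mul_pow, Finset.mul_sum]

lemma nsq_eq_zero {v : Fin D → ℂ} : nsq v = 0 ↔ v = 0 := by
  simp [nsq, Finset.sum_eq_zero_iff_of_nonneg, funext_iff]

lemma norm_sqrt_nsq_sq (v : Fin D → ℂ) : ‖(√(nsq v) : ℂ)‖ ^ 2 = nsq v := by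
  rw [Complex.norm_real, Real.norm_eq_abs, sq_abs, Real.sq_sqrt (nsq_nonneg v)]

lemma exists_nsq_eq_one_and_smul_eq {w : Fin D → ℂ} (hw : w ≠ 0) :
    ∃ u : Fin D → ℂ, nsq u = 1 ∧ (√(nsq w) : ℂ) • u = w := by
  have nsq_ne : nsq w ≠ 0 := nsq_eq_zero.not.2 hw
  have sqrt_ne : (√(nsq w) : ℂ) ≠ 0 :=
    Complex.ofReal_ne_zero.2 ((Real.sqrt_ne_zero (nsq_nonneg w)).2 nsq_ne)
  refine ⟨(√(nsq w) : ℂ)⁻¹ • w, ?_, smul_inv_smul₀ sqrt_ne w⟩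
  rw [nsq_smul, norm_inv, inv_pow, norm_sqrt_nsq_sq, inv_mul_cancel₀ nsq_ne]

lemma exists_sqrt_nsq_smul_mulVec_eq {v : Fin D → ℂ} (hv : nsq v = 1) (w : Fin D → ℂ) :
    ∃ U : UG D, (√(nsq w) : ℂ) • U.1 *ᵥ v = w := by
  rcases eq_or_ne w 0 with rfl | hw
  · exact ⟨1, by rw [nsq_eq_zero.2 rfl, Real.sqrt_zero, Complex.ofReal_zero, zero_smul]⟩
  · obtain ⟨u, nsq_u, smul_u⟩ := exists_nsq_eq_one_and_smul_eq hw
    obtain ⟨U, hU⟩ := exists_mulVec_eq hv nsq_u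
    exact ⟨U, by rw [hU, smul_u]⟩

lemma diagForm_mulVec_pos {b : Fin D → ℝ} (hb : ∀ i, 0 < b i) (U : UG D) {v : Fin D → ℂ}
    (hv : nsq v = 1) : 0 < diagForm b (U.1 *ᵥ v) :=
  diagForm_pos hb fun h => by
    rw [← nsq_eq_zero, nsq_mulVec, hv] at h
    exact one_ne_zero h

end UnitaryAction

section HaarAverage

variable {D : ℕ} {μ : Measure (UG D)}

lemma continuous_inv_mulVec :
    Continuous fun x : UG D × (Fin D → ℂ) => (x.1⁻¹).1 *ᵥ x.2 := by
  refine Continuous.matrix_mulVec ?_ continuous_snd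
  exact continuous_subtype_val.comp (continuous_inv.comp continuous_fst)

lemma continuous_diagForm_inv_mulVec (c : Fin D → ℝ) (v : Fin D → ℂ) :
    Continuous fun U : UG D => diagForm c ((U⁻¹).1 *ᵥ v) := by
  refine (continuous_diagForm c).comp (Continuous.matrix_mulVec ?_ continuous_const)
  exact continuous_subtype_val.comp continuous_inv

lemma lintegral_inv_mulVec_eq [μ.IsMulLeftInvariant] (f : (Fin D → ℂ) → ENNReal) {v : Fin D → ℂ}
    (hv : nsq v = 1) (w : Fin D → ℂ) :
    ∫⁻ U, f ((U⁻¹).1 *ᵥ w) ∂μ = ∫⁻ U, f ((√(nsq w) : ℂ) • (U⁻¹).1 *ᵥ v) ∂μ := by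
  obtain ⟨V, hV⟩ := exists_sqrt_nsq_smul_mulVec_eq hv w
  rw [← lintegral_mul_left_eq_self (fun U => f ((U⁻¹).1 *ᵥ w)) V]
  refine lintegral_congr fun U => ?_
  nth_rw 1 [← hV]
  rw [Matrix.mulVec_smul, Matrix.mulVec_mulVec, ← Matrix.UnitaryGroup.mul_val, mul_inv_rev,
    inv_mul_cancel_right]

lemma lintegral_eq_lintegral_sqrt_nsq_smul [μ.IsMulLeftInvariant] [IsProbabilityMeasure μ]
    {f : (Fin D → ℂ) → ENNReal} (hf : Measurable f) {v : Fin D → ℂ} (hv : nsq v = 1) :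
    ∫⁻ g : Fin D → ℂ, f g =
      ∫⁻ U, (∫⁻ g : Fin D → ℂ, f ((√(nsq g) : ℂ) • (U⁻¹).1 *ᵥ v)) ∂μ := by
  have measurable_rotate : Measurable fun x : UG D × (Fin D → ℂ) => f ((x.1⁻¹).1 *ᵥ x.2) :=
    hf.comp continuous_inv_mulVec.measurable
  have measurable_polar : Measurable fun x : UG D × (Fin D → ℂ) =>
      f ((√(nsq x.2) : ℂ) • (x.1⁻¹).1 *ᵥ v) := by
    refine hf.comp (Continuous.measurable (.fun_smul ?_ ?_))
    · exact Complex.continuous_ofReal.comp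
        (Real.continuous_sqrt.comp (continuous_nsq.comp continuous_snd))
    · exact continuous_inv_mulVec.comp (continuous_fst.prodMk continuous_const)
  calc ∫⁻ g : Fin D → ℂ, f g = ∫⁻ _U, (∫⁻ g : Fin D → ℂ, f g) ∂μ := by simp
    _ = ∫⁻ U, (∫⁻ g : Fin D → ℂ, f ((U⁻¹).1 *ᵥ g)) ∂μ :=
        lintegral_congr fun U => ((measurePreserving_mulVec U⁻¹).lintegral_comp hf).symm
    _ = ∫⁻ g : Fin D → ℂ, (∫⁻ U, f ((U⁻¹).1 *ᵥ g) ∂μ) :=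
        lintegral_lintegral_swap measurable_rotate.aemeasurable
    _ = ∫⁻ g : Fin D → ℂ, (∫⁻ U, f ((√(nsq g) : ℂ) • (U⁻¹).1 *ᵥ v) ∂μ) :=
        lintegral_congr fun g => lintegral_inv_mulVec_eq f hv g
    _ = ∫⁻ U, (∫⁻ g : Fin D → ℂ, f ((√(nsq g) : ℂ) • (U⁻¹).1 *ᵥ v)) ∂μ :=
        (lintegral_lintegral_swap measurable_polar.aemeasurable).symm

lemma lintegral_inv_diagForm_pow [μ.IsMulLeftInvariant] [IsProbabilityMeasure μ]
    {b : Fin D → ℝ} (hb : ∀ i, 0 < b i) {v : Fin D → ℂ} (hv : nsq v = 1) :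
    ∫⁻ U, ENNReal.ofReal ((diagForm b ((U⁻¹).1 *ᵥ v))⁻¹ ^ D) ∂μ =
      ENNReal.ofReal (∏ i, (b i)⁻¹) := by
  have inner_integral (U : UG D) :
      ∫⁻ g : Fin D → ℂ, ENNReal.ofReal
          (Real.exp (-diagForm b ((√(nsq g) : ℂ) • (U⁻¹).1 *ᵥ v))) =
        ENNReal.ofReal (Real.pi ^ D) *
          ENNReal.ofReal ((diagForm b ((U⁻¹).1 *ᵥ v))⁻¹ ^ D) := by
    have h := lintegral_exp_neg_diagForm fun _ : Fin D => diagForm_mulVec_pos hb U⁻¹ hv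
    rw [Finset.prod_const, Finset.card_fin, div_eq_mul_inv, mul_pow,
      ENNReal.ofReal_mul (by positivity)] at h
    rw [← h]
    simp_rw [diagForm_smul_right, norm_sqrt_nsq_sq, mul_comm (nsq _)]
    simp only [diagForm, nsq, Finset.mul_sum]
  have h := lintegral_eq_lintegral_sqrt_nsq_smul (μ := μ)
    (f := fun g => ENNReal.ofReal (Real.exp (-diagForm b g)))
    (continuous_diagForm b).neg.rexp.measurable.ennreal_ofReal hv
  simp_rw [lintegral_exp_neg_diagForm hb, inner_integral, div_eq_mul_inv] at h
  rw [lintegral_const_mul' _ _ ENNReal.ofReal_ne_top, Finset.prod_mul_distrib, Finset.prod_const,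
    Finset.card_fin, ENNReal.ofReal_mul (by positivity)] at h
  exact ((ENNReal.mul_right_inj (by simpa using by positivity) ENNReal.ofReal_ne_top).1 h).symm

end HaarAverage

section Subgaussian

variable {D : ℕ} {μ : Measure (UG D)}

lemma inv_one_sub_le_exp {t : ℝ} (ht : |t| ≤ 1 / 2) : (1 - t)⁻¹ ≤ Real.exp (t + 2 * t ^ 2) := by
  have one_sub_pos : 0 < 1 - t := by linarith [le_abs_self t]
  have inv_le_two : (1 - t)⁻¹ ≤ 2 :=
    inv_le_of_inv_le₀ two_pos (by linarith [le_abs_self t])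
  calc (1 - t)⁻¹ = (t + t ^ 2 * (1 - t)⁻¹) + 1 := by field_simp; ring
    _ ≤ Real.exp (t + t ^ 2 * (1 - t)⁻¹) := Real.add_one_le_exp _
    _ ≤ Real.exp (t + 2 * t ^ 2) := by
      rw [Real.exp_le_exp, mul_comm 2]
      gcongr

lemma diagForm_one_sub_div {v : Fin D → ℂ} (hv : nsq v = 1) (c : Fin D → ℝ) :
    diagForm (fun i => 1 - c i / D) v = 1 - diagForm c v / D := by
  simp only [diagForm, sub_mul, one_mul, Finset.sum_sub_distrib, Finset.sum_div, div_mul_eq_mul_div]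
  rw [← hv, nsq]

lemma prod_inv_one_sub_div_le_exp {c : Fin D → ℝ} (sum_c : ∑ i, c i = 0)
    (abs_c : ∀ i, |c i| ≤ D / 2) :
    ∏ i, (1 - c i / D)⁻¹ ≤ Real.exp (2 * (∑ i, c i ^ 2) / D ^ 2) := by
  have abs_div_le (i : Fin D) : |c i / D| ≤ 1 / 2 := by
    have : (0 : ℝ) < D := by exact_mod_cast i.pos
    rw [abs_div, Nat.abs_cast, div_le_iff₀ this]
    linarith [abs_c i]
  calc ∏ i, (1 - c i / D)⁻¹ ≤ ∏ i, Real.exp (c i / D + 2 * (c i / D) ^ 2) :=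
        Finset.prod_le_prod
          (fun i _ => inv_nonneg.2 (by linarith [le_abs_self (c i / D), abs_div_le i]))
          fun i _ => inv_one_sub_le_exp (abs_div_le i)
    _ = Real.exp (2 * (∑ i, c i ^ 2) / D ^ 2) := by
      rw [← Real.exp_sum, Finset.sum_add_distrib, ← Finset.sum_div, sum_c, zero_div, zero_add]
      simp only [div_pow, ← Finset.mul_sum, ← Finset.sum_div, mul_div_assoc]

variable [μ.IsMulLeftInvariant] [IsProbabilityMeasure μ]

lemma lintegral_exp_diagForm_le_of_nsq_eq_one
    {c : Fin D → ℝ} (sum_c : ∑ i, c i = 0) (abs_c : ∀ i, |c i| ≤ D / 2) {v : Fin D → ℂ}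
    (hv : nsq v = 1) :
    ∫⁻ U, ENNReal.ofReal (Real.exp (diagForm c ((U⁻¹).1 *ᵥ v))) ∂μ ≤
      ENNReal.ofReal (Real.exp (2 * (∑ i, c i ^ 2) / D ^ 2)) := by
  have one_sub_pos (i : Fin D) : 0 < 1 - c i / D := by
    have D_pos : (0 : ℝ) < D := by exact_mod_cast i.pos
    rw [sub_pos, div_lt_one D_pos]
    linarith [le_abs_self (c i), abs_c i]
  have exp_le (U : UG D) : Real.exp (diagForm c ((U⁻¹).1 *ᵥ v)) ≤
      (diagForm (fun i => 1 - c i / D) ((U⁻¹).1 *ᵥ v))⁻¹ ^ D := by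
    have nsq_eq : nsq ((U⁻¹).1 *ᵥ v) = 1 := by rw [nsq_mulVec, hv]
    have pos := diagForm_mulVec_pos one_sub_pos U⁻¹ hv
    rw [diagForm_one_sub_div nsq_eq] at pos ⊢
    rw [inv_pow, le_inv_comm₀ (Real.exp_pos _) (pow_pos pos D), ← Real.exp_neg]
    refine Real.one_sub_div_pow_le_exp_neg ?_
    have D_pos : (0 : ℝ) < D := by exact_mod_cast dim_pos_of_nsq_eq_one hv
    exact ((div_lt_one D_pos).1 (sub_pos.1 pos)).le
  calc _ ≤ ∫⁻ U, ENNReal.ofReal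
        ((diagForm (fun i => 1 - c i / D) ((U⁻¹).1 *ᵥ v))⁻¹ ^ D) ∂μ :=
        lintegral_mono fun U => ENNReal.ofReal_le_ofReal (exp_le U)
    _ = ENNReal.ofReal (∏ i, (1 - c i / D)⁻¹) := lintegral_inv_diagForm_pow one_sub_pos hv
    _ ≤ _ := ENNReal.ofReal_le_ofReal (prod_inv_one_sub_div_le_exp sum_c abs_c)

lemma lintegral_exp_diagForm_le
    {c : Fin D → ℝ} (sum_c : ∑ i, c i = 0) (abs_c : ∀ i, |c i| ≤ D / 2) {w : Fin D → ℂ}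
    (hw : nsq w ≤ 1) :
    ∫⁻ U, ENNReal.ofReal (Real.exp (diagForm c ((U⁻¹).1 *ᵥ w))) ∂μ ≤
      ENNReal.ofReal (Real.exp (2 * (∑ i, c i ^ 2) / D ^ 2)) := by
  rcases eq_or_ne w 0 with rfl | w_ne
  · have diagForm_zero : diagForm c (0 : Fin D → ℂ) = 0 := by simp [diagForm]
    simp only [Matrix.mulVec_zero, diagForm_zero, Real.exp_zero, lintegral_const, measure_univ,
      mul_one]
    exact ENNReal.ofReal_le_ofReal (Real.one_le_exp (by positivity))
  obtain ⟨u, nsq_u, smul_u⟩ := exists_nsq_eq_one_and_smul_eq w_ne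
  have rescale (U : UG D) :
      diagForm c ((U⁻¹).1 *ᵥ w) = diagForm (nsq w • c) ((U⁻¹).1 *ᵥ u) := by
    nth_rw 1 [← smul_u]
    rw [Matrix.mulVec_smul, diagForm_smul_right, norm_sqrt_nsq_sq, diagForm_smul_left]
  simp_rw [rescale]
  refine (lintegral_exp_diagForm_le_of_nsq_eq_one (μ := μ) ?_ (fun i => ?_) nsq_u).trans
    (ENNReal.ofReal_le_ofReal (Real.exp_le_exp.2 ?_))
  · simp only [Pi.smul_apply, smul_eq_mul, ← Finset.mul_sum, sum_c, mul_zero]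
  · rw [Pi.smul_apply, smul_eq_mul, abs_mul, abs_of_nonneg (nsq_nonneg w)]
    exact (mul_le_of_le_one_left (abs_nonneg _) hw).trans (abs_c i)
  · simp only [Pi.smul_apply, smul_eq_mul, mul_pow]
    gcongr with i
    exact mul_le_of_le_one_left (sq_nonneg _) (pow_le_one₀ (nsq_nonneg w) hw)

lemma integrable_exp_diagForm
    {c : Fin D → ℝ} (sum_c : ∑ i, c i = 0) (abs_c : ∀ i, |c i| ≤ D / 2) {w : Fin D → ℂ}
    (hw : nsq w ≤ 1) :
    Integrable (fun U => Real.exp (diagForm c ((U⁻¹).1 *ᵥ w))) μ :=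
  (lintegral_ofReal_ne_top_iff_integrable
    (continuous_diagForm_inv_mulVec c w).rexp.aestronglyMeasurable
    (.of_forall fun _ => (Real.exp_pos _).le)).1
    ((lintegral_exp_diagForm_le sum_c abs_c hw).trans_lt ENNReal.ofReal_lt_top).ne

lemma integral_exp_diagForm_le
    {c : Fin D → ℝ} (sum_c : ∑ i, c i = 0) (abs_c : ∀ i, |c i| ≤ D / 2) {w : Fin D → ℂ}
    (hw : nsq w ≤ 1) :
    ∫ U, Real.exp (diagForm c ((U⁻¹).1 *ᵥ w)) ∂μ ≤
      Real.exp (2 * (∑ i, c i ^ 2) / D ^ 2) := by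
  rw [integral_eq_lintegral_of_nonneg_ae (.of_forall fun _ => (Real.exp_pos _).le)
    (continuous_diagForm_inv_mulVec c w).rexp.aestronglyMeasurable]
  exact ENNReal.toReal_le_of_le_ofReal (Real.exp_pos _).le
    (lintegral_exp_diagForm_le sum_c abs_c hw)

lemma integrable_and_integral_cosh_diagForm_le
    {c : Fin D → ℝ} (sum_c : ∑ i, c i = 0) (abs_c : ∀ i, |c i| ≤ D / 2) {w : Fin D → ℂ}
    (hw : nsq w ≤ 1) :
    Integrable (fun U => Real.cosh (diagForm c ((U⁻¹).1 *ᵥ w))) μ ∧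
      ∫ U, Real.cosh (diagForm c ((U⁻¹).1 *ᵥ w)) ∂μ ≤
        Real.exp (2 * (∑ i, c i ^ 2) / D ^ 2) := by
  have sum_neg_c : ∑ i, (-1 : ℝ) • c i = 0 := by rw [← Finset.smul_sum, sum_c, smul_zero]
  have abs_neg_c (i : Fin D) : |(-1 : ℝ) • c i| ≤ D / 2 := by simpa using abs_c i
  have integrable_pos := integrable_exp_diagForm (μ := μ) sum_c abs_c hw
  have integrable_neg :=
    integrable_exp_diagForm (μ := μ) (c := (-1 : ℝ) • c) sum_neg_c abs_neg_c hw
  have le_pos := integral_exp_diagForm_le (μ := μ) sum_c abs_c hw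
  have le_neg := integral_exp_diagForm_le (μ := μ) (c := (-1 : ℝ) • c) sum_neg_c abs_neg_c hw
  simp only [diagForm_smul_left, neg_mul, one_mul, Pi.smul_apply, smul_eq_mul, neg_sq]
    at integrable_neg le_neg
  simp only [Real.cosh_eq]
  refine ⟨(integrable_pos.add integrable_neg).div_const 2, ?_⟩
  rw [integral_div, integral_add integrable_pos integrable_neg]
  linarith

end Subgaussian

section MaximalInequality

lemma sq_le_sq_add_mul_cosh {A : ℝ} (hA : 0 ≤ A) (z : ℝ) :
    z ^ 2 ≤ A ^ 2 + 4 * (A + 1) * Real.exp (-A) * Real.cosh z := by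
  rcases le_total |z| A with h | h
  · have remainder_nonneg : 0 ≤ 4 * (A + 1) * Real.exp (-A) * Real.cosh z := by
      have := (Real.cosh_pos z).le
      positivity
    linarith [sq_le_sq' (neg_le_of_abs_le h) (le_of_abs_le h)]
  · have quadratic_le := Real.quadratic_le_exp_of_nonneg (sub_nonneg.2 h)
    have excess_le : |z| - A ≤ Real.exp (|z| - A) := by
      linarith [Real.add_one_le_exp (|z| - A)]
    have exp_sub_le : Real.exp (|z| - A) ≤ 2 * (Real.exp (-A) * Real.cosh z) := by
      rw [sub_eq_neg_add, Real.exp_add, mul_left_comm, ← Real.cosh_abs, Real.cosh_eq]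
      gcongr
      linarith [Real.exp_pos (-|z|)]
    calc z ^ 2 = A ^ 2 + 2 * A * (|z| - A) + (|z| - A) ^ 2 := by rw [← sq_abs z]; ring
      _ ≤ A ^ 2 + 2 * A * Real.exp (|z| - A) + 2 * Real.exp (|z| - A) := by
        gcongr
        linarith
      _ ≤ A ^ 2 + 4 * (A + 1) * Real.exp (-A) * Real.cosh z := by
        linarith [mul_le_mul_of_nonneg_left exp_sub_le hA]

lemma integral_le_of_sum_integral_cosh_le {Ω J : Type*} [MeasurableSpace Ω] {μ : Measure Ω}
    [IsProbabilityMeasure μ] [Fintype J] {F : Ω → ℝ} {Y : J → Ω → ℝ} {A : ℝ} (hA : 0 ≤ A)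
    (F_nonneg : ∀ ω, 0 ≤ F ω) (F_le : ∀ ω, ∃ j, F ω ≤ Y j ω ^ 2)
    (integrable_cosh : ∀ j, Integrable (fun ω => Real.cosh (Y j ω)) μ)
    (sum_cosh : ∑ j, ∫ ω, Real.cosh (Y j ω) ∂μ ≤ Real.exp A) :
    ∫ ω, F ω ∂μ ≤ (A + 2) ^ 2 := by
  have integrable_sum : Integrable (fun ω => ∑ j, Real.cosh (Y j ω)) μ :=
    integrable_finsetSum _ fun j _ => integrable_cosh j
  have F_le_sum (ω : Ω) :
      F ω ≤ A ^ 2 + 4 * (A + 1) * Real.exp (-A) * ∑ j, Real.cosh (Y j ω) := by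
    obtain ⟨j, hj⟩ := F_le ω
    refine (hj.trans (sq_le_sq_add_mul_cosh hA _)).trans ?_
    gcongr
    exact Finset.single_le_sum (f := fun j => Real.cosh (Y j ω))
      (fun _ _ => (Real.cosh_pos _).le) (Finset.mem_univ j)
  calc ∫ ω, F ω ∂μ
      ≤ ∫ ω, (A ^ 2 + 4 * (A + 1) * Real.exp (-A) * ∑ j, Real.cosh (Y j ω)) ∂μ :=
        integral_mono_of_nonneg (.of_forall F_nonneg)
          ((integrable_const _).add (integrable_sum.const_mul _)) (.of_forall F_le_sum)
    _ = A ^ 2 + 4 * (A + 1) * Real.exp (-A) * ∑ j, ∫ ω, Real.cosh (Y j ω) ∂μ := by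
        rw [integral_add (integrable_const _) (integrable_sum.const_mul _), integral_const,
          integral_const_mul, integral_finsetSum _ fun j _ => integrable_cosh j]
        simp
    _ ≤ A ^ 2 + 4 * (A + 1) * Real.exp (-A) * Real.exp A := by gcongr
    _ = (A + 2) ^ 2 := by
        rw [mul_assoc _ (Real.exp (-A)), ← Real.exp_add, neg_add_cancel, Real.exp_zero]
        ring

end MaximalInequality

section UniformDeviation

variable {D : ℕ} {μ : Measure (UG D)} [μ.IsMulLeftInvariant] [IsProbabilityMeasure μ]
  {J : Type*} [Fintype J] {c : Fin D → ℝ} {w : J → Fin D → ℂ} {F : UG D → ℝ} {V : ℝ}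

lemma sq_mul_integral_le_of_forall_exists_le_diagForm_sq {A τ : ℝ} (hA : 0 ≤ A) (hτ : 0 ≤ τ)
    (τ_le : τ ≤ D / 2) (sum_c : ∑ i, c i = 0) (abs_c : ∀ i, |c i| ≤ 1)
    (sum_c_sq : ∑ i, c i ^ 2 ≤ V) (hw : ∀ j, nsq (w j) ≤ 1) (F_nonneg : ∀ U, 0 ≤ F U)
    (F_le : ∀ U, ∃ j, F U ≤ diagForm c ((U⁻¹).1 *ᵥ w j) ^ 2)
    (card_mul_exp_le : Fintype.card J * Real.exp (2 * τ ^ 2 * V / D ^ 2) ≤ Real.exp A) :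
    τ ^ 2 * ∫ U, F U ∂μ ≤ (A + 2) ^ 2 := by
  have sum_smul_c : ∑ i, (τ • c) i = 0 := by
    simp only [Pi.smul_apply, ← Finset.smul_sum, sum_c, smul_zero]
  have abs_smul_c (i : Fin D) : |(τ • c) i| ≤ D / 2 := by
    rw [Pi.smul_apply, smul_eq_mul, abs_mul, abs_of_nonneg hτ]
    exact (mul_le_of_le_one_right hτ (abs_c i)).trans τ_le
  have cosh_bound (j : J) :=
    integrable_and_integral_cosh_diagForm_le (μ := μ) sum_smul_c abs_smul_c (hw j)
  rw [← integral_const_mul]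
  refine integral_le_of_sum_integral_cosh_le hA (fun U => mul_nonneg (sq_nonneg τ) (F_nonneg U))
    (fun U => ?_) (fun j => (cosh_bound j).1) ?_
  · obtain ⟨j, hj⟩ := F_le U
    refine ⟨j, ?_⟩
    rw [diagForm_smul_left, mul_pow]
    gcongr
  · calc ∑ j, ∫ U, Real.cosh (diagForm (τ • c) ((U⁻¹).1 *ᵥ w j)) ∂μ
        ≤ ∑ _j : J, Real.exp (2 * (∑ i, (τ • c) i ^ 2) / D ^ 2) :=
          Finset.sum_le_sum fun j _ => (cosh_bound j).2
      _ ≤ ∑ _j : J, Real.exp (2 * τ ^ 2 * V / D ^ 2) := by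
          simp only [Pi.smul_apply, smul_eq_mul, mul_pow, ← Finset.mul_sum, mul_assoc]
          gcongr
      _ ≤ Real.exp A := by simpa using card_mul_exp_le

lemma integral_le_of_forall_exists_le_diagForm_sq (hD : 2 ≤ D) (hV : 4 * Real.log D ≤ V)
    (card_J : Fintype.card J ≤ D ^ 4) (sum_c : ∑ i, c i = 0) (abs_c : ∀ i, |c i| ≤ 1)
    (sum_c_sq : ∑ i, c i ^ 2 ≤ V) (hw : ∀ j, nsq (w j) ≤ 1) (F_nonneg : ∀ U, 0 ≤ F U)
    (F_le : ∀ U, ∃ j, F U ≤ diagForm c ((U⁻¹).1 *ᵥ w j) ^ 2) :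
    ∫ U, F U ∂μ ≤ 81 * V * Real.log D / D ^ 2 := by
  have D_ge : (2 : ℝ) ≤ D := by exact_mod_cast hD
  have D_pos : (0 : ℝ) < D := by linarith
  set L := Real.log D with hL
  have two_thirds_lt_L : 2 / 3 < L :=
    lt_of_lt_of_le (by linarith [Real.log_two_gt_d9]) (Real.log_le_log two_pos D_ge)
  have V_pos : 0 < V := by linarith
  have τ_sq : (D * √(L / V)) ^ 2 = D ^ 2 * (L / V) := by
    rw [mul_pow, Real.sq_sqrt (by positivity)]
  -- This `τ` makes the exponent `2 * τ² * V / D²` comparable to the logarithm of `D ^ 4`.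
  have bound := sq_mul_integral_le_of_forall_exists_le_diagForm_sq (μ := μ) (A := 6 * L)
    (τ := D * √(L / V)) (by positivity) (by positivity) ?_ sum_c abs_c sum_c_sq hw F_nonneg F_le ?_
  · rw [τ_sq] at bound
    rw [← mul_le_mul_iff_right₀ (show 0 < D ^ 2 * (L / V) by positivity)]
    refine bound.trans ?_
    calc (6 * L + 2) ^ 2 ≤ (9 * L) ^ 2 := by gcongr; linarith
      _ = D ^ 2 * (L / V) * (81 * V * L / D ^ 2) := by field_simp; ring
  · have sqrt_le : √(L / V) ≤ 1 / 2 := by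
      refine Real.sqrt_le_iff.2 ⟨by norm_num, ?_⟩
      rw [div_le_iff₀ V_pos]
      linarith
    linarith [mul_le_mul_of_nonneg_left sqrt_le D_pos.le]
  · have exponent : 2 * (D * √(L / V)) ^ 2 * V / D ^ 2 = 2 * L := by rw [τ_sq]; field_simp
    have exp_L (n : ℕ) : Real.exp (n * L) = D ^ n := by
      rw [Real.exp_nat_mul, hL, Real.exp_log D_pos]
    calc Fintype.card J * Real.exp (2 * (D * √(L / V)) ^ 2 * V / D ^ 2)
        ≤ Real.exp ((4 : ℕ) * L) * Real.exp (2 * L) := by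
          rw [exponent, exp_L]
          gcongr
          exact_mod_cast card_J
      _ = Real.exp (6 * L) := by rw [← Real.exp_add]; push_cast; ring_nf

end UniformDeviation

section Polarization

variable {ι : Type*}

/-- The `k`-th vector of the polarization identity for `v` and `w`, normalized so that it lies in
the unit ball whenever `v` and `w` do. -/
def polarVec (v w : ι → ℂ) (k : Fin 4) : ι → ℂ :=
  (2⁻¹ : ℂ) • (v + Complex.I ^ (k : ℕ) • w)

lemma norm_polarVec_apply_sq_le (v w : ι → ℂ) (k : Fin 4) (i : ι) :
    ‖polarVec v w k i‖ ^ 2 ≤ (‖v i‖ ^ 2 + ‖w i‖ ^ 2) / 2 := by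
  have triangle : ‖v i + Complex.I ^ (k : ℕ) * w i‖ ≤ ‖v i‖ + ‖w i‖ := by
    simpa using norm_add_le (v i) (Complex.I ^ (k : ℕ) * w i)
  calc ‖polarVec v w k i‖ ^ 2 = ‖v i + Complex.I ^ (k : ℕ) * w i‖ ^ 2 / 4 := by
        simp only [polarVec, Pi.smul_apply, Pi.add_apply, smul_eq_mul, norm_mul, norm_inv,
          RCLike.norm_ofNat]
        ring
    _ ≤ (‖v i‖ + ‖w i‖) ^ 2 / 4 := by gcongr
    _ ≤ (‖v i‖ ^ 2 + ‖w i‖ ^ 2) / 2 := by linarith [add_sq_le (a := ‖v i‖) (b := ‖w i‖)]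

lemma conj_mul_eq_sum_polarVec (v w : ι → ℂ) (i : ι) :
    (starRingEnd ℂ) (v i) * w i =
      ∑ k : Fin 4, (starRingEnd ℂ) (Complex.I ^ (k : ℕ)) * (‖polarVec v w k i‖ ^ 2 : ℝ) := by
  simp only [Fin.sum_univ_four, polarVec, Complex.sq_norm]
  apply Complex.ext <;> simp [Complex.normSq_apply, pow_succ] <;> ring

variable {D : ℕ}

lemma nsq_polarVec_le {v w : Fin D → ℂ} (hv : nsq v ≤ 1) (hw : nsq w ≤ 1) (k : Fin 4) :
    nsq (polarVec v w k) ≤ 1 := by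
  calc nsq (polarVec v w k) ≤ ∑ i, (‖v i‖ ^ 2 + ‖w i‖ ^ 2) / 2 :=
        Finset.sum_le_sum fun i _ => norm_polarVec_apply_sq_le v w k i
    _ = (nsq v + nsq w) / 2 := by rw [← Finset.sum_div, Finset.sum_add_distrib, nsq, nsq]
    _ ≤ 1 := by linarith

lemma mulVec_polarVec (M : Matrix (Fin D) (Fin D) ℂ) (v w : Fin D → ℂ) (k : Fin 4) :
    M *ᵥ polarVec v w k = polarVec (M *ᵥ v) (M *ᵥ w) k := by
  simp only [polarVec, Matrix.mulVec_smul, Matrix.mulVec_add]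

lemma dotc_diagonal_mulVec_eq_sum_polarVec (c : Fin D → ℝ) (v w : Fin D → ℂ) :
    dotc v (Matrix.diagonal (fun i => (c i : ℂ)) *ᵥ w) =
      ∑ k : Fin 4, (starRingEnd ℂ) (Complex.I ^ (k : ℕ)) * diagForm c (polarVec v w k) := by
  simp only [dotc, Matrix.mulVec_diagonal, diagForm, Complex.ofReal_sum, Complex.ofReal_mul,
    Finset.mul_sum]
  rw [Finset.sum_comm]
  refine Finset.sum_congr rfl fun i _ => ?_
  rw [mul_left_comm, conj_mul_eq_sum_polarVec, Finset.mul_sum]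
  exact Finset.sum_congr rfl fun k _ => mul_left_comm _ _ _

lemma norm_dotc_diagonal_mulVec_sq_le {c : Fin D → ℝ} {v w : Fin D → ℂ} {M : ℝ}
    (hM : ∀ k, diagForm c (polarVec v w k) ^ 2 ≤ M) :
    ‖dotc v (Matrix.diagonal (fun i => (c i : ℂ)) *ᵥ w)‖ ^ 2 ≤ 16 * M := by
  calc ‖dotc v (Matrix.diagonal (fun i => (c i : ℂ)) *ᵥ w)‖ ^ 2
      ≤ (∑ k : Fin 4, |diagForm c (polarVec v w k)|) ^ 2 := by
        rw [dotc_diagonal_mulVec_eq_sum_polarVec]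
        gcongr
        refine (norm_sum_le _ _).trans_eq (Finset.sum_congr rfl fun k _ => ?_)
        simp
    _ ≤ 4 * ∑ k : Fin 4, |diagForm c (polarVec v w k)| ^ 2 := by
        simpa using sq_sum_le_card_mul_sum_sq (s := Finset.univ)
          (f := fun k : Fin 4 => |diagForm c (polarVec v w k)|)
    _ ≤ 4 * ∑ _k : Fin 4, M := by
        gcongr with k
        rw [sq_abs]
        exact hM k
    _ = 16 * M := by
        rw [Finset.sum_const, Finset.card_fin, nsmul_eq_mul]
        push_cast
        ring

end Polarization

section CentredIndicator

variable {D : ℕ}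

/-- The diagonal of the traceless part `P - (d / D) • 1` of the rank `d = s.card` coordinate
projection `P` onto `s`. -/
def centredIndicator (s : Finset (Fin D)) (i : Fin D) : ℝ :=
  (if i ∈ s then 1 else 0) - s.card / D

variable (s : Finset (Fin D))

lemma card_div_mem_Icc : (s.card : ℝ) / D ∈ Set.Icc 0 1 :=
  ⟨by positivity, div_le_one_of_le₀ (by exact_mod_cast card_finset_fin_le s) (by positivity)⟩

lemma sum_centredIndicator : ∑ i, centredIndicator s i = 0 := by
  rcases D.eq_zero_or_pos with rfl | D_pos
  · simp
  · have : (D : ℝ) ≠ 0 := by positivity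
    simp [centredIndicator, mul_div_cancel₀, this]

lemma abs_centredIndicator_le_one (i : Fin D) : |centredIndicator s i| ≤ 1 := by
  obtain ⟨h₀, h₁⟩ := card_div_mem_Icc s
  rw [centredIndicator, abs_le]
  split_ifs <;> constructor <;> linarith

lemma sum_centredIndicator_sq_le : ∑ i, centredIndicator s i ^ 2 ≤ s.card := by
  have sq_eq (i : Fin D) : centredIndicator s i ^ 2 =
      (1 - s.card / D) * (if i ∈ s then 1 else 0) - s.card / D * centredIndicator s i := by
    unfold centredIndicator
    split_ifs <;> ring
  calc ∑ i, centredIndicator s i ^ 2 = (1 - s.card / D) * s.card := by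
        simp only [sq_eq, Finset.sum_sub_distrib, ← Finset.mul_sum, sum_centredIndicator]
        simp
    _ ≤ s.card := mul_le_of_le_one_left (by positivity)
        (by linarith [(card_div_mem_Icc s).1])

lemma dotc_diagonal_centredIndicator_mulVec (v w : Fin D → ℂ) :
    dotc v (Matrix.diagonal (fun i => (centredIndicator s i : ℂ)) *ᵥ w) =
      dotc v (coordProj D s *ᵥ w) - s.card / D * dotc v w := by
  simp only [dotc, coordProj, centredIndicator, Matrix.mulVec_diagonal, Finset.mul_sum,
    ← Finset.sum_sub_distrib]
  refine Finset.sum_congr rfl fun i _ => ?_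
  split_ifs <;> push_cast <;> ring

lemma dotc_rotProj_coordProj_mulVec_sub (U : UG D) (v w : Fin D → ℂ) :
    dotc v (rotProj U (coordProj D s) *ᵥ w) - s.card / D * dotc v w =
      dotc ((U⁻¹).1 *ᵥ v)
        (Matrix.diagonal (fun i => (centredIndicator s i : ℂ)) *ᵥ (U⁻¹).1 *ᵥ w) := by
  rw [dotc_diagonal_centredIndicator_mulVec, dotc_rotProj_mulVec, dotc_mulVec_mulVec]

end CentredIndicator

section ScalarDeviation

variable {D : ℕ} {φ : Fin D → Fin D → ℂ}

/-- The largest `‖⟨φ_α, A φ_β⟩‖²` with `α ≠ β` plus the largest `‖⟨φ_α, A φ_α⟩ - t‖²`: a measure of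
how far the matrix of `A` in the basis `φ` is from the scalar `t`. -/
def scalarDeviation (φ : Fin D → Fin D → ℂ) (A : Matrix (Fin D) (Fin D) ℂ) (t : ℂ) : ℝ :=
  (⨆ α, ⨆ β, ⨆ _ : α ≠ β, ‖dotc (φ α) (A *ᵥ φ β)‖ ^ 2) + ⨆ α, ‖dotc (φ α) (A *ᵥ φ α) - t‖ ^ 2

variable {A : Matrix (Fin D) (Fin D) ℂ} {t : ℂ}

lemma scalarDeviation_nonneg : 0 ≤ scalarDeviation φ A t :=
  add_nonneg
    (Real.iSup_nonneg fun _ => Real.iSup_nonneg fun _ => Real.iSup_nonneg fun _ => sq_nonneg _)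
    (Real.iSup_nonneg fun _ => sq_nonneg _)

lemma scalarDeviation_le {B : ℝ} (hB : 0 ≤ B)
    (h : ∀ α β, ‖dotc (φ α) (A *ᵥ φ β) - t * (if α = β then 1 else 0)‖ ^ 2 ≤ B) :
    scalarDeviation φ A t ≤ 2 * B := by
  have offdiag_le : (⨆ α, ⨆ β, ⨆ _ : α ≠ β, ‖dotc (φ α) (A *ᵥ φ β)‖ ^ 2) ≤ B :=
    Real.iSup_le (fun α => Real.iSup_le (fun β => Real.iSup_le (fun hαβ => by
      simpa [hαβ] using h α β) hB) hB) hB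
  have diag_le : (⨆ α, ‖dotc (φ α) (A *ᵥ φ α) - t‖ ^ 2) ≤ B :=
    Real.iSup_le (fun α => by simpa using h α α) hB
  exact (add_le_add offdiag_le diag_le).trans_eq (two_mul B).symm

lemma exists_scalarDeviation_rotProj_le [Nonempty (Fin D)]
    (hφ : ∀ α β, dotc (φ α) (φ β) = if α = β then 1 else 0) (s : Finset (Fin D)) (U : UG D) :
    ∃ j : Fin D × Fin D × Fin 4, scalarDeviation φ (rotProj U (coordProj D s)) (s.card / D) ≤
      32 * diagForm (centredIndicator s) ((U⁻¹).1 *ᵥ polarVec (φ j.1) (φ j.2.1) j.2.2) ^ 2 := by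
  obtain ⟨j, j_max⟩ := Finite.exists_max fun j : Fin D × Fin D × Fin 4 =>
    diagForm (centredIndicator s) ((U⁻¹).1 *ᵥ polarVec (φ j.1) (φ j.2.1) j.2.2) ^ 2
  have coeff_le (α β : Fin D) := norm_dotc_diagonal_mulVec_sq_le fun k =>
    mulVec_polarVec (U⁻¹).1 (φ α) (φ β) k ▸ j_max (α, β, k)
  simp only [← dotc_rotProj_coordProj_mulVec_sub, hφ] at coeff_le
  exact ⟨j, (scalarDeviation_le (by positivity) coeff_le).trans_eq (by ring)⟩

lemma deviation_bound_lt_ten_mul_log_div {D d : ℕ} (hD : 2 ≤ D) (log_lt : 512 * Real.log D < d)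
    (lt_div : (d : ℝ) < D / 512) :
    2592 * (d + 4 * Real.log D) * Real.log D / D ^ 2 < 10 * Real.log D / D := by
  have D_pos : (0 : ℝ) < D := by positivity
  have log_pos : 0 < Real.log D := Real.log_pos (by exact_mod_cast hD)
  calc 2592 * (d + 4 * Real.log D) * Real.log D / D ^ 2
      < 10 * D * Real.log D / D ^ 2 :=
        div_lt_div_of_pos_right (mul_lt_mul_of_pos_right (by linarith) log_pos) (pow_pos D_pos 2)
    _ = 10 * Real.log D / D := by field_simp

end ScalarDeviation

theorem stmt2_general {D : ℕ} (hD : 2 ≤ D) {φ : Fin D → Fin D → ℂ}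
    (hφ : ∀ α β, dotc (φ α) (φ β) = if α = β then 1 else 0) (s : Finset (Fin D))
    (μ : Measure (UG D)) [μ.IsMulLeftInvariant] [IsProbabilityMeasure μ] :
    ∫ U, scalarDeviation φ (rotProj U (coordProj D s)) (s.card / D) ∂μ ≤
      2592 * (s.card + 4 * Real.log D) * Real.log D / D ^ 2 := by
  have nsq_φ (α : Fin D) : nsq (φ α) ≤ 1 := by
    have h : (nsq (φ α) : ℂ) = 1 := by rw [← dotc_self, hφ, if_pos rfl]
    exact (Complex.ofReal_eq_one.1 h).le
  have card_le : Fintype.card (Fin D × Fin D × Fin 4) ≤ D ^ 4 := by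
    simp only [Fintype.card_prod, Fintype.card_fin]
    nlinarith [Nat.pow_le_pow_left hD 2]
  have sum_sq_le : ∑ i, centredIndicator s i ^ 2 ≤ s.card + 4 * Real.log D :=
    (sum_centredIndicator_sq_le s).trans (by linarith [Real.log_natCast_nonneg D])
  have : Nonempty (Fin D) := ⟨⟨0, by lia⟩⟩
  have bound := integral_le_of_forall_exists_le_diagForm_sq (μ := μ)
    (F := fun U => 32⁻¹ * scalarDeviation φ (rotProj U (coordProj D s)) (s.card / D))
    hD (by simp) card_le (sum_centredIndicator s) (abs_centredIndicator_le_one s) sum_sq_le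
    (fun j => nsq_polarVec_le (nsq_φ j.1) (nsq_φ j.2.1) j.2.2)
    (fun U => mul_nonneg (by norm_num) scalarDeviation_nonneg)
    (fun U => (exists_scalarDeviation_rotProj_le hφ s U).imp fun j hj =>
      (inv_mul_le_iff₀ (by norm_num)).2 hj)
  rw [integral_const_mul, inv_mul_le_iff₀ (by norm_num)] at bound
  exact bound.trans_eq (by ring)

/-- The fundamental technical lemma. -/
theorem stmt2 :
    ∃ C₁ : ℝ, 0 < C₁ ∧
      ∀ (D d : ℕ), 2 ≤ D →
      ∀ φ : Fin D → Fin D → ℂ, (∀ α β, dotc (φ α) (φ β) = if α = β then 1 else 0) →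
      ∀ s : Finset (Fin D), s.card = d →
      C₁ * Real.log D < d → (d : ℝ) < D / C₁ →
      ∀ (μ : Measure (UG D)), μ.IsHaarMeasure → IsProbabilityMeasure μ →
      (∫ U, ((⨆ α, ⨆ β, ⨆ _ : α ≠ β,
          ‖dotc (φ α) ((rotProj U (coordProj D s)).mulVec (φ β))‖ ^ 2) +
        ⨆ α, ‖dotc (φ α) ((rotProj U (coordProj D s)).mulVec (φ α)) - (d : ℂ) / D‖ ^ 2) ∂μ)
        < 10 * Real.log D / D := by
  refine ⟨512, by norm_num, ?_⟩
  rintro D _ hD φ hφ s rfl log_lt lt_div μ _ _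
  exact (stmt2_general hD hφ s μ).trans_lt (deviation_bound_lt_ten_mul_log_div hD log_lt lt_div)
end
end

section
/- Let ε > 0 and δ > 0 be given, let d_1,…,d_N be positive integers with D = d_1+⋯+d_N, and assume d_ν > D − ε²·δ·D·(D+1)/N² for all ν = 1,…,N. Let φ ∈ ℂ^D be a fixed unit vector. Then the Haar probability of the set of U ∈ U(D) such that for every ν = 1,…,N one has | ‖U P_ν⁰ U⁻¹ φ‖² − d_ν/D | < ε·√(d_ν/(D·N)), is greater than 1 − δ. -/
open MeasureTheory Filter
noncomputable section

/-- The orthogonal projection P_ν⁰ onto the span of the standard basis vectors whose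
indices lie in the ν-th block (of size d ν) of the partition d of D. -/
def blockProj {N : ℕ} (D : ℕ) (d : Fin N → ℕ) (ν : Fin N) : Matrix (Fin D) (Fin D) ℂ :=
  Matrix.diagonal (fun i => if (∑ μ ∈ Finset.univ.filter (fun μ => μ < ν), d μ) ≤ (i : ℕ) ∧
      (i : ℕ) < ∑ μ ∈ Finset.univ.filter (fun μ => μ ≤ ν), d μ then 1 else 0)

/-!
Since `‖U P U⁻¹ φ‖ = ‖P (U⁻¹ φ)‖`, everything takes place on the unit sphere of `ℂⁿ`, where the
vector `U⁻¹ φ` is uniformly distributed: its law is invariant under every linear isometry.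

By invariance `𝔼 |⟨x, w⟩|⁴ = m ‖w‖⁴` for a constant `m`. Averaging this identity over
`w = u + iᵏ v`, `k = 0, 1, 2, 3`, for orthonormal `u, v` gives `𝔼 |⟨x, u⟩|² |⟨x, v⟩|² = m / 2`, and
expanding `(∑ⱼ |⟨x, eⱼ⟩|²)² = 1` in an orthonormal basis then yields `m = 2 / (n (n + 1))`. Hence
`‖P x‖²` has mean `d / n` and variance `d (n - d) / (n² (n + 1))` for a projection `P` of rank `d`.
The lower bound on the `d_ν` makes the probability that Chebyshev's inequality assigns to each
exceptional event smaller than `δ / N`, and a union bound finishes the proof.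
-/

open Module ProbabilityTheory
open scoped InnerProductSpace

section InnerProductSpace

variable {𝕜 E : Type*} [RCLike 𝕜] [NormedAddCommGroup E] [InnerProductSpace 𝕜 E]

lemma exists_linearIsometryEquiv_apply_eq [FiniteDimensional 𝕜 E] {u v : E} (huv : ‖u‖ = ‖v‖) :
    ∃ V : E ≃ₗᵢ[𝕜] E, V u = v := by
  rcases eq_or_ne u 0 with rfl | hu
  · exact ⟨.refl 𝕜 E, by simpa [eq_comm] using huv⟩
  have exists_basis (w : E) (hw : w ≠ 0) (i : Fin (finrank 𝕜 E)) :
      ∃ b : OrthonormalBasis (Fin (finrank 𝕜 E)) 𝕜 E, w = (‖w‖ : 𝕜) • b i := by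
    obtain ⟨b, hb⟩ := Orthonormal.exists_orthonormalBasis_extension_of_card_eq
      (v := fun _ ↦ (‖w‖⁻¹ : 𝕜) • w) (s := {i}) (Fintype.card_fin _).symm
      (by simpa using norm_smul_inv_norm hw)
    refine ⟨b, ?_⟩
    rw [hb i rfl, smul_inv_smul₀ (by simpa using hw)]
  have : Nontrivial E := nontrivial_of_ne u 0 hu
  let i : Fin (finrank 𝕜 E) := ⟨0, finrank_pos⟩
  obtain ⟨b, hb⟩ := exists_basis u hu i
  obtain ⟨b', hb'⟩ := exists_basis v (norm_ne_zero_iff.1 (huv ▸ norm_ne_zero_iff.2 hu)) i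
  refine ⟨b.equiv b' (Equiv.refl _), ?_⟩
  rw [hb, map_smul, b.equiv_apply_basis, Equiv.refl_apply, huv, ← hb']

lemma norm_starProjection_sq_eq_sum {ι : Type*} [Fintype ι] {K : Submodule 𝕜 E}
    [K.HasOrthogonalProjection] (b : OrthonormalBasis ι 𝕜 K) (x : E) :
    ‖K.starProjection x‖ ^ 2 = ∑ i, ‖⟪x, (b i : E)⟫_𝕜‖ ^ 2 := by
  rw [Submodule.starProjection_apply, Submodule.norm_coe, ← b.sum_sq_norm_inner_left]
  simp only [Submodule.inner_orthogonalProjectionOnto_eq_of_mem_right]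

end InnerProductSpace

lemma sum_range_four_norm_add_I_pow_mul_pow_four (a b : ℂ) :
    ∑ k ∈ Finset.range 4, ‖a + Complex.I ^ k * b‖ ^ 4 =
      4 * (‖a‖ ^ 4 + ‖b‖ ^ 4 + 4 * (‖a‖ ^ 2 * ‖b‖ ^ 2)) := by
  have norm_pow_four (z : ℂ) : ‖z‖ ^ 4 = (z.re ^ 2 + z.im ^ 2) ^ 2 := by
    rw [pow_mul ‖z‖ 2 2, Complex.sq_norm, Complex.normSq_apply]
    ring
  simp only [Finset.sum_range_succ, Finset.sum_range_zero, norm_pow_four, Complex.sq_norm,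
    Complex.normSq_apply, Complex.add_re, Complex.add_im, Complex.mul_re, Complex.mul_im,
    Complex.neg_re, Complex.neg_im, Complex.one_re, Complex.one_im, Complex.I_re, Complex.I_im,
    pow_zero, pow_one, Complex.I_sq, Complex.I_pow_three]
  ring

/-- `ν` is the uniform probability measure on the unit sphere of the complex inner product space
`E`, expressed by its invariance under linear isometries. -/
class IsUniformOnSphere {E : Type*} [NormedAddCommGroup E] [InnerProductSpace ℂ E]
    [MeasurableSpace E] (ν : Measure E) : Prop extends IsProbabilityMeasure ν where
  map_linearIsometryEquiv (V : E ≃ₗᵢ[ℂ] E) : ν.map V = ν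
  ae_norm_eq_one : ∀ᵐ x ∂ν, ‖x‖ = 1

namespace IsUniformOnSphere

variable {E : Type*} [NormedAddCommGroup E] [InnerProductSpace ℂ E] [MeasurableSpace E]
  {ν : Measure E} [IsUniformOnSphere ν]

lemma integral_norm_pow (k : ℕ) : ∫ x, ‖x‖ ^ k ∂ν = 1 := by
  simpa using integral_congr_ae ((ae_norm_eq_one (ν := ν)).mono fun x hx ↦
    show ‖x‖ ^ k = 1 by rw [hx, one_pow])

variable [BorelSpace E]

lemma integral_comp_linearIsometryEquiv (V : E ≃ₗᵢ[ℂ] E) (f : E → ℝ) :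
    ∫ x, f (V x) ∂ν = ∫ x, f x ∂ν := by
  conv_rhs => rw [← map_linearIsometryEquiv (ν := ν) V]
  exact (V.toHomeomorph.measurableEmbedding.integral_map f).symm

variable [FiniteDimensional ℂ E]

lemma memLp_of_continuous {f : E → ℝ} (hf : Continuous f) (p : ENNReal) : MemLp f p ν := by
  obtain ⟨C, hC⟩ := (isCompact_sphere (0 : E) 1).exists_bound_of_continuousOn hf.continuousOn
  refine MemLp.of_bound hf.aestronglyMeasurable C ?_
  filter_upwards [ae_norm_eq_one (ν := ν)] with x hx
  exact hC x (by simpa using hx)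

lemma integrable_of_continuous {f : E → ℝ} (hf : Continuous f) : Integrable f ν :=
  memLp_one_iff_integrable.1 (memLp_of_continuous hf 1)

lemma integral_norm_inner_pow {u : E} (hu : ‖u‖ = 1) (w : E) (k : ℕ) :
    ∫ x, ‖⟪x, w⟫_ℂ‖ ^ k ∂ν = ‖w‖ ^ k * ∫ x, ‖⟪x, u⟫_ℂ‖ ^ k ∂ν := by
  obtain ⟨V, hV⟩ := exists_linearIsometryEquiv_apply_eq (𝕜 := ℂ)
    (u := (‖w‖ : ℂ) • u) (v := w) (by simp [norm_smul, hu])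
  have norm_inner_map (x : E) : ‖⟪V x, w⟫_ℂ‖ = ‖w‖ * ‖⟪x, u⟫_ℂ‖ := by
    conv_lhs => rw [← hV, V.inner_map_map, inner_smul_right, norm_mul, Complex.norm_real, norm_norm]
  calc ∫ x, ‖⟪x, w⟫_ℂ‖ ^ k ∂ν
      = ∫ x, ‖⟪V x, w⟫_ℂ‖ ^ k ∂ν :=
        (integral_comp_linearIsometryEquiv V fun x ↦ ‖⟪x, w⟫_ℂ‖ ^ k).symm
    _ = ‖w‖ ^ k * ∫ x, ‖⟪x, u⟫_ℂ‖ ^ k ∂ν := by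
        simp only [norm_inner_map, mul_pow, integral_const_mul]

lemma integral_norm_inner_sq_mul_norm_inner_sq {u v : E} (hu : ‖u‖ = 1) (hv : ‖v‖ = 1)
    (huv : ⟪u, v⟫_ℂ = 0) :
    ∫ x, ‖⟪x, u⟫_ℂ‖ ^ 2 * ‖⟪x, v⟫_ℂ‖ ^ 2 ∂ν = (∫ x, ‖⟪x, u⟫_ℂ‖ ^ 4 ∂ν) / 2 := by
  have norm_add_pow_four (k : ℕ) : ‖u + Complex.I ^ k • v‖ ^ 4 = 4 := by
    rw [pow_mul _ 2 2, norm_add_sq (𝕜 := ℂ), inner_smul_right, huv, norm_smul, hu, hv]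
    norm_num
  have average : ∑ k ∈ Finset.range 4, ∫ x, ‖⟪x, u + Complex.I ^ k • v⟫_ℂ‖ ^ 4 ∂ν =
      16 * ∫ x, ‖⟪x, u⟫_ℂ‖ ^ 4 ∂ν := by
    simp only [fun k ↦ integral_norm_inner_pow (ν := ν) hu (u + Complex.I ^ k • v) 4,
      norm_add_pow_four, Finset.sum_const, Finset.card_range]
    ring
  rw [← integral_finsetSum _ fun k _ ↦ integrable_of_continuous (by fun_prop)] at average
  simp only [inner_add_right, inner_smul_right, sum_range_four_norm_add_I_pow_mul_pow_four]
    at average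
  rw [integral_const_mul, integral_add, integral_add, integral_const_mul,
    integral_norm_inner_pow hu v, hv] at average
  · linarith
  all_goals exact integrable_of_continuous (by fun_prop)

lemma integral_sum_norm_inner_sq {ι : Type*} [Fintype ι] {e : ι → E} (he : Orthonormal ℂ e)
    {u : E} (hu : ‖u‖ = 1) :
    ∫ x, ∑ i, ‖⟪x, e i⟫_ℂ‖ ^ 2 ∂ν = Fintype.card ι * ∫ x, ‖⟪x, u⟫_ℂ‖ ^ 2 ∂ν := by
  rw [integral_finsetSum _ fun i _ ↦ integrable_of_continuous (by fun_prop)]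
  simp only [fun i ↦ integral_norm_inner_pow (ν := ν) hu (e i) 2, he.1, one_pow, one_mul,
    Finset.sum_const, Finset.card_univ, nsmul_eq_mul]

lemma integral_sum_norm_inner_sq_sq {ι : Type*} [Fintype ι] {e : ι → E} (he : Orthonormal ℂ e)
    {u : E} (hu : ‖u‖ = 1) :
    ∫ x, (∑ i, ‖⟪x, e i⟫_ℂ‖ ^ 2) ^ 2 ∂ν =
      Fintype.card ι * (Fintype.card ι + 1) / 2 * ∫ x, ‖⟪x, u⟫_ℂ‖ ^ 4 ∂ν := by
  classical
  have fourth (i : ι) : ∫ x, ‖⟪x, e i⟫_ℂ‖ ^ 4 ∂ν = ∫ x, ‖⟪x, u⟫_ℂ‖ ^ 4 ∂ν := by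
    rw [integral_norm_inner_pow hu, he.1, one_pow, one_mul]
  have mixed (i j : ι) : ∫ x, ‖⟪x, e i⟫_ℂ‖ ^ 2 * ‖⟪x, e j⟫_ℂ‖ ^ 2 ∂ν =
      (1 + if i = j then 1 else 0) * ((∫ x, ‖⟪x, u⟫_ℂ‖ ^ 4 ∂ν) / 2) := by
    split_ifs with hij
    · simp only [← hij, ← pow_add, fourth]
      ring
    · rw [integral_norm_inner_sq_mul_norm_inner_sq (he.1 i) (he.1 j) (he.2 hij), fourth]
      ring
  calc ∫ x, (∑ i, ‖⟪x, e i⟫_ℂ‖ ^ 2) ^ 2 ∂ν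
      = ∫ x, ∑ i, ∑ j, ‖⟪x, e i⟫_ℂ‖ ^ 2 * ‖⟪x, e j⟫_ℂ‖ ^ 2 ∂ν := by
        simp only [sq (Finset.sum _ _), Finset.sum_mul_sum]
    _ = ∑ i, ∑ j, ∫ x, ‖⟪x, e i⟫_ℂ‖ ^ 2 * ‖⟪x, e j⟫_ℂ‖ ^ 2 ∂ν := by
        rw [integral_finsetSum _ fun i _ ↦ integrable_of_continuous (by fun_prop)]
        exact Finset.sum_congr rfl fun i _ ↦
          integral_finsetSum _ fun j _ ↦ integrable_of_continuous (by fun_prop)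
    _ = Fintype.card ι * (Fintype.card ι + 1) / 2 * ∫ x, ‖⟪x, u⟫_ℂ‖ ^ 4 ∂ν := by
        simp only [mixed, ← Finset.sum_mul, Finset.sum_add_distrib, Finset.sum_ite_eq,
          Finset.mem_univ, if_true, Finset.sum_const, Finset.card_univ, nsmul_eq_mul]
        ring

lemma integral_norm_inner_sq {u : E} (hu : ‖u‖ = 1) :
    ∫ x, ‖⟪x, u⟫_ℂ‖ ^ 2 ∂ν = 1 / finrank ℂ E := by
  let b := stdOrthonormalBasis ℂ E
  have total : ∫ x, ∑ i, ‖⟪x, b i⟫_ℂ‖ ^ 2 ∂ν = 1 := by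
    simp only [b.sum_sq_norm_inner_left, integral_norm_pow]
  rw [integral_sum_norm_inner_sq b.orthonormal hu, Fintype.card_fin] at total
  exact eq_one_div_of_mul_eq_one_right total

lemma integral_norm_inner_pow_four {u : E} (hu : ‖u‖ = 1) :
    ∫ x, ‖⟪x, u⟫_ℂ‖ ^ 4 ∂ν = 2 / (finrank ℂ E * (finrank ℂ E + 1)) := by
  let b := stdOrthonormalBasis ℂ E
  have total : ∫ x, (∑ i, ‖⟪x, b i⟫_ℂ‖ ^ 2) ^ 2 ∂ν = 1 := by
    simp only [b.sum_sq_norm_inner_left, ← pow_mul, integral_norm_pow]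
  rw [integral_sum_norm_inner_sq_sq b.orthonormal hu, Fintype.card_fin] at total
  have : Nontrivial E := nontrivial_of_ne u 0 (norm_ne_zero_iff.1 (hu ▸ one_ne_zero))
  have : (0 : ℝ) < finrank ℂ E := mod_cast finrank_pos
  field_simp
  linarith

lemma integral_norm_starProjection_sq (K : Submodule ℂ E) :
    ∫ x, ‖K.starProjection x‖ ^ 2 ∂ν = finrank ℂ K / finrank ℂ E := by
  obtain ⟨u, hu⟩ := (ae_norm_eq_one (ν := ν)).exists
  let b := stdOrthonormalBasis ℂ K
  have hb : Orthonormal ℂ fun i ↦ (b i : E) := b.orthonormal.comp_linearIsometry K.subtypeₗᵢ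
  simp only [norm_starProjection_sq_eq_sum b]
  rw [integral_sum_norm_inner_sq hb hu, integral_norm_inner_sq hu, Fintype.card_fin, mul_one_div]

lemma integral_norm_starProjection_sq_sq (K : Submodule ℂ E) :
    ∫ x, (‖K.starProjection x‖ ^ 2) ^ 2 ∂ν =
      finrank ℂ K * (finrank ℂ K + 1) / (finrank ℂ E * (finrank ℂ E + 1)) := by
  obtain ⟨u, hu⟩ := (ae_norm_eq_one (ν := ν)).exists
  let b := stdOrthonormalBasis ℂ K
  have hb : Orthonormal ℂ fun i ↦ (b i : E) := b.orthonormal.comp_linearIsometry K.subtypeₗᵢ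
  simp only [norm_starProjection_sq_eq_sum b]
  rw [integral_sum_norm_inner_sq_sq hb hu, integral_norm_inner_pow_four hu, Fintype.card_fin]
  ring

lemma variance_norm_starProjection_sq (K : Submodule ℂ E) :
    Var[fun x ↦ ‖K.starProjection x‖ ^ 2; ν] =
      finrank ℂ K * (finrank ℂ E - finrank ℂ K) / (finrank ℂ E ^ 2 * (finrank ℂ E + 1)) := by
  rw [variance_eq_sub (memLp_of_continuous (by fun_prop) 2)]
  simp only [Pi.pow_apply, integral_norm_starProjection_sq, integral_norm_starProjection_sq_sq]
  rcases eq_or_ne (finrank ℂ E : ℝ) 0 with hE | hE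
  · simp [hE]
  · field_simp
    ring

lemma measureReal_le_abs_norm_starProjection_sq_sub_le (K : Submodule ℂ E) {c : ℝ} (hc : 0 < c) :
    ν.real {x | c ≤ |‖K.starProjection x‖ ^ 2 - finrank ℂ K / finrank ℂ E|} ≤
      finrank ℂ K * (finrank ℂ E - finrank ℂ K) / (finrank ℂ E ^ 2 * (finrank ℂ E + 1)) /
        c ^ 2 := by
  rw [← variance_norm_starProjection_sq (ν := ν), ← integral_norm_starProjection_sq (ν := ν)]
  exact ENNReal.toReal_le_of_le_ofReal (div_nonneg (variance_nonneg _ _) (sq_nonneg c))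
    (meas_ge_le_variance_div_sq (memLp_of_continuous (by fun_prop) 2) hc)

end IsUniformOnSphere

lemma one_sub_lt_measureReal_setOf_forall {Ω ι : Type*} [MeasurableSpace Ω] {μ : Measure Ω}
    [IsProbabilityMeasure μ] [Fintype ι] {p : ι → Ω → Prop} {δ : ℝ} (hδ : 0 < δ)
    (hp : ∀ i, μ.real {ω | ¬ p i ω} < δ / Fintype.card ι) :
    1 - δ < μ.real {ω | ∀ i, p i ω} := by
  have exceptional : μ.real {ω | ∀ i, p i ω}ᶜ < δ := by
    rcases isEmpty_or_nonempty ι with _ | _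
    · simpa
    calc μ.real {ω | ∀ i, p i ω}ᶜ
        ≤ ∑ i, μ.real {ω | ¬ p i ω} := by
          rw [Set.ofPred_forall, Set.compl_iInter]
          exact measureReal_iUnion_fintype_le _
      _ < ∑ _i : ι, δ / Fintype.card ι :=
          Finset.sum_lt_sum_of_nonempty Finset.univ_nonempty fun i _ ↦ hp i
      _ = δ := by simp [mul_div_cancel₀]
  have total : 1 ≤ μ.real {ω | ∀ i, p i ω} + μ.real {ω | ∀ i, p i ω}ᶜ := by
    simpa using measureReal_union_le (μ := μ) {ω | ∀ i, p i ω} {ω | ∀ i, p i ω}ᶜ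
  linarith

theorem IsUniformOnSphere.one_sub_lt_measureReal_forall_abs_norm_starProjection_sq_sub_lt
    {E ι : Type*} [NormedAddCommGroup E] [InnerProductSpace ℂ E] [MeasurableSpace E]
    [BorelSpace E] [FiniteDimensional ℂ E] [Fintype ι] (ν : Measure E) [IsUniformOnSphere ν]
    {ε δ : ℝ} (hε : 0 < ε) (hδ : 0 < δ) {K : ι → Submodule ℂ E} (hK : ∀ i, K i ≠ ⊥)
    (hlow : ∀ i, (finrank ℂ E : ℝ) -
      ε ^ 2 * δ * finrank ℂ E * (finrank ℂ E + 1) / Fintype.card ι ^ 2 < finrank ℂ (K i)) :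
    1 - δ < ν.real {x | ∀ i, |‖(K i).starProjection x‖ ^ 2 - finrank ℂ (K i) / finrank ℂ E| <
      ε * √(finrank ℂ (K i) / (finrank ℂ E * Fintype.card ι))} := by
  refine one_sub_lt_measureReal_setOf_forall hδ fun i ↦ ?_
  have : Nontrivial (K i) := Submodule.nontrivial_iff_ne_bot.2 (hK i)
  have : Nontrivial E := (K i).subtype_injective.nontrivial
  have hι : (0 : ℝ) < Fintype.card ι := mod_cast Fintype.card_pos_iff.2 ⟨i⟩
  have hd : (0 : ℝ) < finrank ℂ (K i) := mod_cast finrank_pos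
  have hn : (0 : ℝ) < finrank ℂ E := mod_cast finrank_pos
  have hsub : (finrank ℂ E : ℝ) - finrank ℂ (K i) <
      ε ^ 2 * δ * finrank ℂ E * (finrank ℂ E + 1) / Fintype.card ι ^ 2 := by
    linarith [hlow i]
  simp only [not_lt]
  refine (measureReal_le_abs_norm_starProjection_sq_sub_le (K i) (by positivity)).trans_lt ?_
  rw [mul_pow, Real.sq_sqrt (by positivity), div_lt_iff₀ (by positivity)]
  calc (finrank ℂ (K i) : ℝ) * (finrank ℂ E - finrank ℂ (K i)) /
        (finrank ℂ E ^ 2 * (finrank ℂ E + 1))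
      < finrank ℂ (K i) * (ε ^ 2 * δ * finrank ℂ E * (finrank ℂ E + 1) / Fintype.card ι ^ 2) /
        (finrank ℂ E ^ 2 * (finrank ℂ E + 1)) := by gcongr
    _ = δ / Fintype.card ι * (ε ^ 2 * (finrank ℂ (K i) / (finrank ℂ E * Fintype.card ι))) := by
        field_simp

lemma isMulRightInvariant_of_isProbabilityMeasure {G : Type*} [Group G] [TopologicalSpace G]
    [IsTopologicalGroup G] [LocallyCompactSpace G] [MeasurableSpace G] [BorelSpace G]
    (μ : Measure G) [μ.IsHaarMeasure] [IsProbabilityMeasure μ] : μ.IsMulRightInvariant where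
  map_mul_right_eq_self g := by
    have : IsProbabilityMeasure (μ.map (· * g)) := Measure.isProbabilityMeasure_map (by fun_prop)
    exact Measure.isHaarMeasure_eq_of_isProbabilityMeasure _ _

section UnitaryGroup

open Matrix

variable {n : Type*} [Fintype n] [DecidableEq n]

instance : LocallyCompactSpace (unitaryGroup n ℂ) :=
  have : LocallyCompactSpace (Matrix n n ℂ) := inferInstanceAs (LocallyCompactSpace (n → n → ℂ))
  isClosed_unitary.locallyCompactSpace

lemma exists_unitaryGroup_toEuclideanCLM_eq
    (V : EuclideanSpace ℂ n ≃ₗᵢ[ℂ] EuclideanSpace ℂ n) :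
    ∃ W : unitaryGroup n ℂ, ∀ x, toEuclideanCLM (𝕜 := ℂ) (W : Matrix n n ℂ) x = V x := by
  let e : Matrix n n ℂ ≃⋆ₐ[ℂ] (EuclideanSpace ℂ n →L[ℂ] EuclideanSpace ℂ n) := toEuclideanCLM
  have hV := (Unitary.linearIsometryEquiv.symm V).2
  refine ⟨⟨e.symm (Unitary.linearIsometryEquiv.symm V).1, Unitary.map_mem e.symm hV⟩, fun x ↦ ?_⟩
  exact DFunLike.congr_fun (e.apply_symm_apply (Unitary.linearIsometryEquiv.symm V).1) x

lemma norm_toEuclideanCLM_unitaryGroup (U : unitaryGroup n ℂ) (x : EuclideanSpace ℂ n) :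
    ‖toEuclideanCLM (𝕜 := ℂ) (U : Matrix n n ℂ) x‖ = ‖x‖ :=
  ContinuousLinearMap.norm_map_of_mem_unitary (Unitary.map_mem toEuclideanCLM U.2) x

lemma continuous_toEuclideanCLM_inv_apply (φ : EuclideanSpace ℂ n) :
    Continuous fun U : unitaryGroup n ℂ ↦
      toEuclideanCLM (𝕜 := ℂ) ((U⁻¹ : unitaryGroup n ℂ) : Matrix n n ℂ) φ :=
  (PiLp.continuous_toLp 2 _).comp <|
    (continuous_subtype_val.comp continuous_inv).matrix_mulVec continuous_const

lemma isUniformOnSphere_map_toEuclideanCLM_inv [MeasurableSpace (unitaryGroup n ℂ)]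
    [BorelSpace (unitaryGroup n ℂ)] (μ : Measure (unitaryGroup n ℂ)) [μ.IsMulRightInvariant]
    [IsProbabilityMeasure μ] {φ : EuclideanSpace ℂ n} (hφ : ‖φ‖ = 1) :
    IsUniformOnSphere (μ.map fun U ↦
      toEuclideanCLM (𝕜 := ℂ) ((U⁻¹ : unitaryGroup n ℂ) : Matrix n n ℂ) φ) where
  toIsProbabilityMeasure := Measure.isProbabilityMeasure_map
    (continuous_toEuclideanCLM_inv_apply φ).aemeasurable
  map_linearIsometryEquiv V := by
    have hmeas := (continuous_toEuclideanCLM_inv_apply φ).measurable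
    obtain ⟨W, hW⟩ := exists_unitaryGroup_toEuclideanCLM_eq V
    nth_rw 2 [← map_mul_right_eq_self μ W⁻¹]
    rw [Measure.map_map V.continuous.measurable hmeas, Measure.map_map hmeas (by fun_prop)]
    congr 1
    ext1 U
    simp [← hW]
  ae_norm_eq_one := by
    rw [ae_map_iff (continuous_toEuclideanCLM_inv_apply φ).aemeasurable
      (isClosed_eq continuous_norm continuous_const).measurableSet]
    exact ae_of_all μ fun U ↦ (norm_toEuclideanCLM_unitaryGroup U⁻¹ φ).trans hφ

lemma exists_toEuclideanCLM_eq_starProjection {P : Matrix n n ℂ} (hP : IsStarProjection P) :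
    ∃ K : Submodule ℂ (EuclideanSpace ℂ n),
      toEuclideanCLM (𝕜 := ℂ) P = K.starProjection ∧ finrank ℂ K = P.rank := by
  obtain ⟨K, _, hK⟩ := isStarProjection_iff_eq_starProjection.1
    (hP.map (toEuclideanCLM (n := n) (𝕜 := ℂ)))
  refine ⟨K, hK, ?_⟩
  rw [P.rank_eq_finrank_range_toLin (EuclideanSpace.basisFun n ℂ).toBasis
    (EuclideanSpace.basisFun n ℂ).toBasis, ← K.range_starProjection, ← hK]
  rfl

end UnitaryGroup

lemma nsq_eq_norm_toLp_sq {D : ℕ} (v : Fin D → ℂ) : nsq v = ‖WithLp.toLp 2 v‖ ^ 2 :=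
  (EuclideanSpace.norm_sq_eq _).symm

lemma nsq_rotProj_mulVec {D : ℕ} (U : UG D) (P : Matrix (Fin D) (Fin D) ℂ) (v : Fin D → ℂ) :
    nsq ((rotProj U P).mulVec v) =
      ‖Matrix.toEuclideanCLM (𝕜 := ℂ) P (Matrix.toEuclideanCLM (𝕜 := ℂ)
        ((U⁻¹ : UG D) : Matrix (Fin D) (Fin D) ℂ) (WithLp.toLp 2 v))‖ ^ 2 := by
  rw [nsq_eq_norm_toLp_sq, ← Matrix.toEuclideanCLM_toLp, rotProj, mul_assoc, map_mul, map_mul,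
    mul_apply_eq_comp, mul_apply_eq_comp, norm_toEuclideanCLM_unitaryGroup]

theorem stmt8_general {D : ℕ} {ι : Type*} [Fintype ι] {ε δ : ℝ} (hε : 0 < ε) (hδ : 0 < δ)
    {P : ι → Matrix (Fin D) (Fin D) ℂ} (hP : ∀ ν, IsStarProjection (P ν))
    (hrank : ∀ ν, 0 < (P ν).rank)
    (hlow : ∀ ν, (D : ℝ) - ε ^ 2 * δ * D * (D + 1) / Fintype.card ι ^ 2 < (P ν).rank)
    {φ : Fin D → ℂ} (hφ : nsq φ = 1) (μ : Measure (UG D)) [μ.IsHaarMeasure]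
    [IsProbabilityMeasure μ] :
    1 - δ < μ.real {U | ∀ ν, |nsq ((rotProj U (P ν)).mulVec φ) - (P ν).rank / D| <
      ε * √((P ν).rank / (D * Fintype.card ι))} := by
  have := isMulRightInvariant_of_isProbabilityMeasure μ
  rw [nsq_eq_norm_toLp_sq, pow_eq_one_iff_of_nonneg (norm_nonneg _) two_ne_zero] at hφ
  have huniform := isUniformOnSphere_map_toEuclideanCLM_inv μ hφ
  choose K hK hKrank using fun ν ↦ exists_toEuclideanCLM_eq_starProjection (hP ν)
  have concentration :=
    huniform.one_sub_lt_measureReal_forall_abs_norm_starProjection_sq_sub_lt _ hε hδ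
      (fun ν ↦ Submodule.one_le_finrank_iff.1 (hKrank ν ▸ hrank ν))
      (by simpa only [hKrank, finrank_euclideanSpace_fin] using hlow)
  rw [map_measureReal_apply (continuous_toEuclideanCLM_inv_apply _).measurable] at concentration
  · simp only [hKrank, finrank_euclideanSpace_fin, ← hK] at concentration
    simpa only [nsq_rotProj_mulVec] using! concentration
  · rw [Set.ofPred_forall]
    exact .iInter fun ν ↦ (isOpen_lt (by fun_prop) continuous_const).measurableSet

lemma sum_filter_le_eq_add {ι M : Type*} [Fintype ι] [LinearOrder ι] [AddCommMonoid M]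
    (f : ι → M) (i : ι) : ∑ j with j ≤ i, f j = ∑ j with j < i, f j + f i := by
  have : Finset.univ.filter (· ≤ i) = insert i (Finset.univ.filter (· < i)) := by
    ext j
    simp [le_iff_eq_or_lt]
  rw [this, Finset.sum_insert (by simp), add_comm]

section Block

open Matrix

variable {N : ℕ} (D : ℕ) (d : Fin N → ℕ) (ν : Fin N)

lemma isStarProjection_blockProj : IsStarProjection (blockProj D d ν) where
  isIdempotentElem := by simp [IsIdempotentElem, blockProj]
  isSelfAdjoint := by
    simp [IsSelfAdjoint, blockProj, star_eq_conjTranspose, diagonal_conjTranspose, Pi.star_def,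
      apply_ite]

lemma rank_blockProj (hD : ∑ κ, d κ ≤ D) : (blockProj D d ν).rank = d ν := by
  let a := ∑ κ with κ < ν, d κ
  let b := ∑ κ with κ ≤ ν, d κ
  have hbD : b ≤ D := (Finset.sum_le_univ_sum_of_nonneg fun _ ↦ Nat.zero_le _).trans hD
  calc (blockProj D d ν).rank
      = Fintype.card {i : Fin D // a ≤ i ∧ (i : ℕ) < b} := by
        simp [blockProj, rank_diagonal, a, b]
    _ = (Finset.Ico a b).card := by
        rw [Fintype.card_subtype, ← Finset.card_map Fin.valEmbedding]
        congr 1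
        ext k
        simpa [Fin.exists_iff] using fun _ hk ↦ hk.trans_le hbD
    _ = d ν := by
        rw [Nat.card_Ico, show b = a + d ν from sum_filter_le_eq_add d ν, Nat.add_sub_cancel_left]

end Block

theorem stmt8 (D N : ℕ) (hN : 1 ≤ N) (ε δ : ℝ) (hε : 0 < ε) (hδ : 0 < δ)
    (d : Fin N → ℕ) (hd : ∀ ν, 0 < d ν) (hD : D = ∑ ν, d ν)
    (hlow : ∀ ν, (D : ℝ) - ε ^ 2 * δ * D * (D + 1) / N ^ 2 < d ν)
    (φ : Fin D → ℂ) (hφ : nsq φ = 1)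
    (μ : Measure (UG D)) [μ.IsHaarMeasure] [IsProbabilityMeasure μ] :
    1 - δ < (μ {U : UG D | ∀ ν,
        |nsq ((rotProj U (blockProj D d ν)).mulVec φ) - d ν / D| <
          ε * Real.sqrt (d ν / (D * N))}).toReal := by
  simpa only [rank_blockProj D d _ hD.ge, Fintype.card_fin] using!
    stmt8_general hε hδ (isStarProjection_blockProj D d)
      (by simpa only [rank_blockProj D d _ hD.ge] using hd)
      (by simpa only [rank_blockProj D d _ hD.ge, Fintype.card_fin] using hlow) hφ μ
end
end
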